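/- arXiv:2106.12612 — 5 statements merged into one kernel-verified Lean document; each statement's English description precedes it below -/
import Mathlib

section
/- Let D ≥ 1 and let h : Fin D → ℝ satisfy h d > 0 for all d. Then the infimum, over all α : Fin D → ℝ with α d > 0 for all d and ∏_{d} α d = 1, of the quantity ∑_{d} h d / (α d)^2 equals D · (∏_{d} h d)^{1/D}; moreover this infimum is attained by some admissible α. -/
/-- For `D ≥ 1` and `h : Fin D → ℝ` with `h d > 0`, the infimum over
α-scale parameters `α` (i.e. `α d > 0` and `∏ d, α d = 1`) of `∑ d, h d / (α d)^2`
equals `D * (∏ d, h d) ^ (1/D)`, and it is attained (i.e. it is a least element). -/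
theorem minimum_sharpness_closed_form (D : ℕ) (hD : 1 ≤ D) (h : Fin D → ℝ)
    (hpos : ∀ d, 0 < h d) :
    IsLeast {s : ℝ | ∃ α : Fin D → ℝ, (∀ d, 0 < α d) ∧ (∏ d, α d) = 1 ∧
        s = ∑ d, h d / (α d) ^ 2}
      ((D : ℝ) * (∏ d, h d) ^ ((1 : ℝ) / (D : ℝ))) := by
  have hD0 : (0 : ℝ) < (D : ℝ) := by exact_mod_cast hD
  have hP : 0 < ∏ d, h d := Finset.prod_pos fun d _ => hpos d
  constructor
  · set G : ℝ := (∏ d, h d) ^ ((1 : ℝ) / (D : ℝ)) with hG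
    have hGpos : 0 < G := Real.rpow_pos_of_pos hP _
    have hGD : G ^ D = ∏ d, h d := by
      rw [hG, ← Real.rpow_natCast, ← Real.rpow_mul hP.le, one_div,
        inv_mul_cancel₀ hD0.ne', Real.rpow_one]
    have hq : ∀ d, 0 < h d / G := fun d => div_pos (hpos d) hGpos
    have hαpos : ∀ d, 0 < Real.sqrt (h d / G) := fun d => Real.sqrt_pos.2 (hq d)
    refine ⟨fun d => Real.sqrt (h d / G), hαpos, ?_, ?_⟩
    · have h1 : (∏ d, Real.sqrt (h d / G)) ^ 2 = 1 := by
        rw [← Finset.prod_pow]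
        simp_rw [Real.sq_sqrt (hq _).le]
        rw [Finset.prod_div_distrib, Finset.prod_const, Finset.card_univ, Fintype.card_fin, hGD,
          div_self hP.ne']
      have h2 : 0 ≤ ∏ d, Real.sqrt (h d / G) := Finset.prod_nonneg fun d _ => (hαpos d).le
      exact (pow_eq_one_iff_of_nonneg h2 two_ne_zero).1 h1
    · have h3 : ∀ d, h d / Real.sqrt (h d / G) ^ 2 = G := fun d => by
        rw [Real.sq_sqrt (hq d).le, div_div_cancel₀ (hpos d).ne']
      simp [h3]
  · rintro s ⟨α, hα, hprod, rfl⟩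
    have key := Real.geom_mean_le_arith_mean Finset.univ (fun _ : Fin D => (1 : ℝ))
      (fun d => h d / (α d) ^ 2) (fun _ _ => zero_le_one) (by simpa using hD0)
      (fun d _ => (div_pos (hpos d) (pow_pos (hα d) 2)).le)
    simp only [Real.rpow_one, Finset.prod_div_distrib, Finset.prod_pow, hprod, one_pow, div_one,
      one_mul, Finset.sum_const, Finset.card_univ, Fintype.card_fin, nsmul_eq_mul, mul_one] at key
    rw [le_div_iff₀ hD0] at key
    rw [one_div, mul_comm]
    exact key
end

section
/- Let D ≥ 1, let h : Fin D → ℝ satisfy h d > 0 for all d, and let α : Fin D → ℝ satisfy α d > 0 for all d and ∏_{d} α d = 1. Then the infimum over all β : Fin D → ℝ with β d > 0 and ∏_{d} β d = 1 of ∑_{d} (h d / (α d)^2) / (β d)^2 equals the infimum over the same set of β of ∑_{d} h d / (β d)^2. -/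
/-- Scale invariance of Minimum Sharpness: replacing the per-layer
traces `h d` by `h d / (α d)^2` for an α-scale parameter `α` does not change the
infimum over α-scale parameters `β` of `∑ d, (·) / (β d)^2`. -/
theorem minimum_sharpness_scale_invariant (D : ℕ) (hD : 1 ≤ D) (h α : Fin D → ℝ)
    (hpos : ∀ d, 0 < h d) (hα : ∀ d, 0 < α d) (hαprod : (∏ d, α d) = 1) :
    sInf {s : ℝ | ∃ β : Fin D → ℝ, (∀ d, 0 < β d) ∧ (∏ d, β d) = 1 ∧
        s = ∑ d, (h d / (α d) ^ 2) / (β d) ^ 2}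
      = sInf {s : ℝ | ∃ β : Fin D → ℝ, (∀ d, 0 < β d) ∧ (∏ d, β d) = 1 ∧
        s = ∑ d, h d / (β d) ^ 2} := by
  congr 1
  ext s
  simp only [Set.mem_setOf_eq]
  constructor
  · rintro ⟨β, hβ, hp, rfl⟩
    refine ⟨fun d => α d * β d, fun d => mul_pos (hα d) (hβ d), ?_, ?_⟩
    · rw [Finset.prod_mul_distrib, hαprod, hp, one_mul]
    · refine Finset.sum_congr rfl fun d _ => ?_
      rw [div_div, mul_pow]
  · rintro ⟨β, hβ, hp, rfl⟩
    refine ⟨fun d => β d / α d, fun d => div_pos (hβ d) (hα d), ?_, ?_⟩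
    · rw [Finset.prod_div_distrib, hαprod, hp, div_one]
    · refine Finset.sum_congr rfl fun d _ => ?_
      rw [div_div, ← mul_pow, mul_div_cancel₀ _ (hα d).ne']
end

section
/- Let J : Matrix (Fin n) (Fin m) ℝ, W : Matrix (Fin m) (Fin K) ℝ with columns w_l = (fun i ↦ W i l), p : Fin K → ℝ, and x : Fin r → ℝ. Then the trace of the Kronecker product (J * W * (Matrix.diagonal p − Matrix.vecMulVec p p) * Wᵀ * Jᵀ) ⊗ₖ (Matrix.vecMulVec x x) equals ∑_{l} p l · ‖(J ⬝ᵥ w_l) xᵀ‖_F² − ‖(J ⬝ᵥ (W ⬝ᵥ p)) xᵀ‖_F², where for vectors u, v the matrix u vᵀ is vecMulVec u v and ‖A‖_F² = ∑_{i,j} (A i j)^2 is the squared Frobenius norm. -/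
open Matrix Kronecker

/-- Per-layer Hessian-block trace identity:
`Tr[(J W (diag p − p pᵀ) Wᵀ Jᵀ) ⊗ₖ (x xᵀ)]
  = ∑_l p_l ‖(J w_l) xᵀ‖_F² − ‖(J (W p)) xᵀ‖_F²`,
where `w_l` is the `l`-th column of `W` and `‖A‖_F² = ∑ i j, (A i j)^2`. -/
theorem kronecker_hessian_block_trace (n m K r : ℕ)
    (J : Matrix (Fin n) (Fin m) ℝ) (W : Matrix (Fin m) (Fin K) ℝ)
    (p : Fin K → ℝ) (x : Fin r → ℝ) :
    Matrix.trace
        ((J * W * (Matrix.diagonal p - Matrix.vecMulVec p p) * Wᵀ * Jᵀ) ⊗ₖ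
          Matrix.vecMulVec x x)
      = (∑ l, p l *
            ∑ i, ∑ j, (Matrix.vecMulVec (J.mulVec fun q => W q l) x i j) ^ 2)
        - ∑ i, ∑ j, (Matrix.vecMulVec (J.mulVec (W.mulVec p)) x i j) ^ 2 := by
  have hF : ∀ u : Fin n → ℝ, ∑ i, ∑ j, (Matrix.vecMulVec u x i j) ^ 2
      = (∑ i, u i ^ 2) * ∑ j, x j ^ 2 := by
    intro u
    simp only [Matrix.vecMulVec_apply, mul_pow, Finset.sum_mul_sum]
  have hx : Matrix.trace (Matrix.vecMulVec x x) = ∑ j, x j ^ 2 := by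
    simp only [Matrix.trace, Matrix.diag_apply, Matrix.vecMulVec_apply, sq]
  have hcol : ∀ l, (J.mulVec fun q => W q l) = fun i => (J * W) i l := by
    intro l
    rfl
  have hA : J * W * (Matrix.diagonal p - Matrix.vecMulVec p p) * Wᵀ * Jᵀ
      = J * W * Matrix.diagonal p * (J * W)ᵀ
        - Matrix.vecMulVec ((J * W).mulVec p) ((J * W).mulVec p) := by
    rw [Matrix.mul_assoc _ Wᵀ, ← Matrix.transpose_mul, Matrix.mul_sub, Matrix.sub_mul,
      Matrix.mul_vecMulVec, Matrix.vecMulVec_mul, Matrix.vecMul_transpose]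
  have h1 : Matrix.trace (J * W * Matrix.diagonal p * (J * W)ᵀ)
      = ∑ l, p l * ∑ i, (J * W) i l ^ 2 := by
    generalize J * W = A
    simp only [Matrix.trace, Matrix.diag_apply, Matrix.mul_apply (M := A * Matrix.diagonal p),
      Matrix.mul_diagonal, Matrix.transpose_apply, Finset.mul_sum]
    rw [Finset.sum_comm]
    refine Finset.sum_congr rfl fun l _ => Finset.sum_congr rfl fun i _ => ?_
    ring
  rw [Matrix.trace_kronecker, hA, Matrix.trace_sub, h1, hx]
  simp only [hF, hcol, Matrix.mulVec_mulVec]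
  have h2 : ∀ u : Fin n → ℝ, Matrix.trace (Matrix.vecMulVec u u) = ∑ j, u j ^ 2 := by
    intro u
    simp only [Matrix.trace, Matrix.diag_apply, Matrix.vecMulVec_apply, sq]
  rw [h2, sub_mul, Finset.sum_mul]
  simp only [mul_assoc]
end

section
/- Let n, D, K ≥ 1 and suppose that for each data index i ∈ Fin n and layer index d ∈ Fin D we are given matrices J_{i,d} : Matrix (Fin (a d)) (Fin m) ℝ, vectors x_{i,d} : Fin (r d) → ℝ, probability weights p_i : Fin K → ℝ, and a matrix W : Matrix (Fin m) (Fin K) ℝ with columns w_l. Then (1/n) · ∑_{i} ∑_{d} trace[(J_{i,d} * W * (Matrix.diagonal (p_i) − Matrix.vecMulVec (p_i) (p_i)) * Wᵀ * J_{i,d}ᵀ) ⊗ₖ (Matrix.vecMulVec (x_{i,d}) (x_{i,d}))] = (1/n) · ∑_{i} ∑_{d} ( ∑_{l} p_i l · ‖(J_{i,d} ⬝ᵥ w_l) (x_{i,d})ᵀ‖_F² − ‖(J_{i,d} ⬝ᵥ (W ⬝ᵥ p_i)) (x_{i,d})ᵀ‖_F² ), where ‖A‖_F² = ∑_{i,j}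 (A i j)^2 and u vᵀ denotes vecMulVec u v. -/
open Matrix Kronecker

theorem trace_aux {α κ : Type*} [Fintype α] [Fintype κ] [DecidableEq κ]
    (A : Matrix α κ ℝ) (p : κ → ℝ) :
    Matrix.trace (A * (Matrix.diagonal p - Matrix.vecMulVec p p) * Aᵀ)
      = (∑ l, p l * ∑ i, (A i l) ^ 2) - ∑ i, (A.mulVec p i) ^ 2 := by
  rw [Matrix.mul_sub, Matrix.sub_mul, Matrix.trace_sub]
  congr 1
  · simp only [Matrix.trace, Matrix.diag, Matrix.mul_apply (N := Aᵀ), Matrix.mul_diagonal,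
      Matrix.transpose_apply, Finset.mul_sum]
    rw [Finset.sum_comm]
    refine Finset.sum_congr rfl fun l _ => Finset.sum_congr rfl fun i _ => ?_
    ring
  · rw [Matrix.mul_vecMulVec, Matrix.vecMulVec_mul, Matrix.vecMul_transpose]
    simp only [Matrix.trace, Matrix.diag, Matrix.vecMulVec_apply, sq]

theorem frob_aux {α β : Type*} [Fintype α] [Fintype β] (u : α → ℝ) (v : β → ℝ) :
    ∑ i, ∑ j, (Matrix.vecMulVec u v i j) ^ 2 = (∑ i, u i ^ 2) * ∑ j, v j ^ 2 := by
  simp only [Matrix.vecMulVec_apply, mul_pow, Finset.sum_mul_sum]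

/-- Matrix-identity form of Proposition 1: the averaged sum over data
`i` and layers `d` of the traces of the diagonal Hessian blocks
`(J_{i,d} W (diag p_i − p_i p_iᵀ) Wᵀ J_{i,d}ᵀ) ⊗ₖ (x_{i,d} x_{i,d}ᵀ)` equals the
averaged sum of the scores
`∑_l p_i l ‖(J_{i,d} w_l) x_{i,d}ᵀ‖_F² − ‖(J_{i,d} (W p_i)) x_{i,d}ᵀ‖_F²`. -/
theorem hessian_trace_decomposition (n D K m : ℕ)
    (hn : 1 ≤ n) (hD : 1 ≤ D) (hK : 1 ≤ K)
    (a r : Fin D → ℕ)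
    (J : Fin n → ∀ d : Fin D, Matrix (Fin (a d)) (Fin m) ℝ)
    (x : Fin n → ∀ d : Fin D, Fin (r d) → ℝ)
    (p : Fin n → Fin K → ℝ)
    (W : Matrix (Fin m) (Fin K) ℝ) :
    (1 / n : ℝ) *
        ∑ i, ∑ d,
          Matrix.trace
            ((J i d * W *
                (Matrix.diagonal (p i) - Matrix.vecMulVec (p i) (p i)) * Wᵀ *
                (J i d)ᵀ) ⊗ₖ Matrix.vecMulVec (x i d) (x i d))
      = (1 / n : ℝ) *
          ∑ i, ∑ d,
            ((∑ l, p i l *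
                ∑ i', ∑ j,
                  (Matrix.vecMulVec ((J i d).mulVec fun q => W q l) (x i d) i' j) ^ 2)
              - ∑ i', ∑ j,
                  (Matrix.vecMulVec ((J i d).mulVec (W.mulVec (p i))) (x i d) i' j) ^ 2) := by
  congr 1
  refine Finset.sum_congr rfl fun i _ => Finset.sum_congr rfl fun d _ => ?_
  have e : J i d * W * (Matrix.diagonal (p i) - Matrix.vecMulVec (p i) (p i)) * Wᵀ * (J i d)ᵀ
      = (J i d * W) * (Matrix.diagonal (p i) - Matrix.vecMulVec (p i) (p i)) * (J i d * W)ᵀ := by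
    rw [Matrix.transpose_mul, ← Matrix.mul_assoc]
  have hx : Matrix.trace (Matrix.vecMulVec (x i d) (x i d)) = ∑ j, x i d j ^ 2 := by
    simp only [Matrix.trace, Matrix.diag, Matrix.vecMulVec_apply, sq]
  rw [e, Matrix.trace_kronecker, trace_aux, hx]
  simp only [frob_aux]
  rw [sub_mul, Finset.sum_mul, Matrix.mulVec_mulVec]
  congr 1
  refine Finset.sum_congr rfl fun l _ => ?_
  rw [mul_assoc]
  rfl
end

section
/- Fix D ≥ 1, weight matrices W_k for k = 1, …, D of a fully-connected ReLU network, an input x with activations x_1 = x and x_{k+1} = φ(W_k ⬝ᵥ x_k), and define σ'(t) = if t > 0 then 1 else 0 applied entrywise to the preactivations z_{k+1} = W_k ⬝ᵥ x_k. For 1 ≤ d < D define the Jacobian matrix J_d(W, x) = Matrix.diagonal (σ'(z_{d+1})) * (W_{d+1})ᵀ * Matrix.diagonal (σ'(z_{d+2})) * (W_{d+2})ᵀ * ⋯ * Matrix.diagonal (σ'(z_D)) * (W_D)ᵀ. If α : Fin D → ℝ satisfies α k > 0 for all k, then J_d computed from the rescaled weights (α k • W_k) at the same input x equals (∏_{k=d+1}^{D}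 α k) • J_d(W, x). -/
open Matrix

/-- Activations of a fully-connected ReLU network: `acts D n W x k` is the activation
vector at layer `k` (the paper's `x_{k+1}`), with `acts 0 = x` and
`acts (k+1) = φ(W_k ⬝ᵥ acts k)`, `φ` being entrywise ReLU. -/
noncomputable def acts (D : ℕ) (n : ℕ → ℕ)
    (W : ∀ d : Fin D, Matrix (Fin (n (d.val + 1))) (Fin (n d.val)) ℝ)
    (x : Fin (n 0) → ℝ) : (k : ℕ) → k ≤ D → Fin (n k) → ℝ
  | 0, _ => x
  | k + 1, hk => fun i =>
      max (Matrix.mulVec (W ⟨k, hk⟩) (acts D n W x k (Nat.le_of_succ_le hk)) i) 0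

/-- Preactivations: `preact D n W x (k+1) = W_k ⬝ᵥ acts k` (the paper's `z_{k+2}`);
at level `0` we conventionally return the input. -/
noncomputable def preact (D : ℕ) (n : ℕ → ℕ)
    (W : ∀ d : Fin D, Matrix (Fin (n (d.val + 1))) (Fin (n d.val)) ℝ)
    (x : Fin (n 0) → ℝ) : (k : ℕ) → k ≤ D → Fin (n k) → ℝ
  | 0, _ => x
  | k + 1, hk => Matrix.mulVec (W ⟨k, hk⟩) (acts D n W x k (Nat.le_of_succ_le hk))

/-- The derivative of ReLU (with the convention `σ' 0 = 0`):
`σ'(t) = if t > 0 then 1 else 0`. -/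
noncomputable def reluDeriv (t : ℝ) : ℝ := if 0 < t then 1 else 0

/-- The layer Jacobian `J_d`, built as the left-to-right product
`J_d = diag(σ'(z_{d+1})) W_{d+1}ᵀ ⋯ diag(σ'(z_D)) W_Dᵀ` (paper 1-indexed; in 0-indexed
form `jac d j = F_d * F_{d+1} * ⋯ * F_{j-1}` for `j > d`, where
`F_j = diag(σ'(preact j)) * (W j)ᵀ`), with `jac d d = 1`. Values at `j < d` are junk. -/
noncomputable def jac (D : ℕ) (n : ℕ → ℕ)
    (W : ∀ d : Fin D, Matrix (Fin (n (d.val + 1))) (Fin (n d.val)) ℝ)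
    (x : Fin (n 0) → ℝ) (d : ℕ) :
    (j : ℕ) → j ≤ D → Matrix (Fin (n d)) (Fin (n j)) ℝ
  | 0, _ => fun i i' => if d = 0 ∧ (i : ℕ) = (i' : ℕ) then 1 else 0
  | j + 1, hj =>
      if d = j + 1 then
        fun i i' => if (i : ℕ) = (i' : ℕ) then 1 else 0
      else
        jac D n W x d j (Nat.le_of_succ_le hj) *
          (Matrix.diagonal (fun i => reluDeriv (preact D n W x j (Nat.le_of_succ_le hj) i)) *
            (W ⟨j, hj⟩)ᵀ)

theorem acts_scale (D : ℕ) (n : ℕ → ℕ)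
    (W : ∀ d : Fin D, Matrix (Fin (n (d.val + 1))) (Fin (n d.val)) ℝ)
    (x : Fin (n 0) → ℝ) (α : Fin D → ℝ) (hα : ∀ k, 0 < α k) (k : ℕ) (hk : k ≤ D) :
    ∃ c : ℝ, 0 < c ∧ acts D n (fun k => α k • W k) x k hk = c • acts D n W x k hk := by
  induction k with
  | zero => exact ⟨1, one_pos, by simp [acts]⟩
  | succ k ih =>
    obtain ⟨c, hc, h⟩ := ih (Nat.le_of_succ_le hk)
    have hp : 0 < α ⟨k, hk⟩ * c := mul_pos (hα _) hc
    refine ⟨α ⟨k, hk⟩ * c, hp, ?_⟩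
    funext i
    simp only [acts, h, Matrix.smul_mulVec, Matrix.mulVec_smul, Pi.smul_apply, smul_eq_mul]
    rw [mul_max_of_nonneg _ _ hp.le, mul_zero]
    congr 1
    ring

theorem reluDeriv_mul (c t : ℝ) (hc : 0 < c) : reluDeriv (c * t) = reluDeriv t := by
  simp [reluDeriv, mul_pos_iff_of_pos_left hc]

theorem reluDeriv_preact_scale (D : ℕ) (n : ℕ → ℕ)
    (W : ∀ d : Fin D, Matrix (Fin (n (d.val + 1))) (Fin (n d.val)) ℝ)
    (x : Fin (n 0) → ℝ) (α : Fin D → ℝ) (hα : ∀ k, 0 < α k) (k : ℕ) (hk : k ≤ D)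
    (i : Fin (n k)) :
    reluDeriv (preact D n (fun k => α k • W k) x k hk i)
      = reluDeriv (preact D n W x k hk i) := by
  cases k with
  | zero => simp [preact]
  | succ k =>
    obtain ⟨c, hc, h⟩ := acts_scale D n W x α hα k (Nat.le_of_succ_le hk)
    simp only [preact, h, Matrix.smul_mulVec, Matrix.mulVec_smul, Pi.smul_apply, smul_eq_mul,
      reluDeriv_mul _ _ (hα _), reluDeriv_mul _ _ hc]

theorem jac_succ (D : ℕ) (n : ℕ → ℕ)
    (W : ∀ d : Fin D, Matrix (Fin (n (d.val + 1))) (Fin (n d.val)) ℝ)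
    (x : Fin (n 0) → ℝ) (d : ℕ) (j : ℕ) (hj : j + 1 ≤ D) (hd : ¬ d = j + 1) :
    jac D n W x d (j + 1) hj = jac D n W x d j (Nat.le_of_succ_le hj) *
          (Matrix.diagonal (fun i => reluDeriv (preact D n W x j (Nat.le_of_succ_le hj) i)) *
            (W ⟨j, hj⟩)ᵀ) := by
  rw [jac]
  exact if_neg hd

theorem jac_scale (D : ℕ) (n : ℕ → ℕ)
    (W : ∀ d : Fin D, Matrix (Fin (n (d.val + 1))) (Fin (n d.val)) ℝ)
    (x : Fin (n 0) → ℝ) (α : Fin D → ℝ) (hα : ∀ k, 0 < α k)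
    (d : ℕ) (j : ℕ) (hj : j ≤ D) (hdj : d ≤ j) :
    jac D n (fun k => α k • W k) x d j hj
      = (∏ k ∈ Finset.univ.filter (fun k : Fin D => d ≤ (k : ℕ) ∧ (k : ℕ) < j), α k) •
          jac D n W x d j hj := by
  induction j with
  | zero =>
    simp [jac]
    exact (one_smul ℝ _).symm
  | succ j ih =>
    by_cases hd : d = j + 1
    · have he : Finset.univ.filter (fun k : Fin D => d ≤ (k : ℕ) ∧ (k : ℕ) < j + 1) = ∅ := by
        ext k
        simp
        omega
      rw [he]
      simp [jac, hd]
      exact (one_smul ℝ _).symm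
    · have he : Finset.univ.filter (fun k : Fin D => d ≤ (k : ℕ) ∧ (k : ℕ) < j + 1)
          = insert (⟨j, hj⟩ : Fin D)
            (Finset.univ.filter (fun k : Fin D => d ≤ (k : ℕ) ∧ (k : ℕ) < j)) := by
        ext k
        simp [Fin.ext_iff]
        omega
      rw [he, Finset.prod_insert (by simp)]
      rw [jac_succ D n _ x d j hj hd, jac_succ D n W x d j hj hd]
      rw [ih (Nat.le_of_succ_le hj) (by omega)]
      simp only [reluDeriv_preact_scale D n W x α hα, Matrix.transpose_smul, Matrix.mul_smul,
        Matrix.smul_mul, smul_smul]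

/-- Jacobian scaling law: if `α k > 0` for all `k`, then the Jacobian
`J_d` (for `1 ≤ d < D`) computed from the rescaled weights `α k • W k` at the same
input `x` equals `(∏_{k=d+1}^{D} α_k) • J_d(W, x)` (in 0-indexed form, the product of
`α j` over all `j : Fin D` with `d ≤ j`). -/
theorem jacobian_scaling (D : ℕ) (n : ℕ → ℕ)
    (W : ∀ d : Fin D, Matrix (Fin (n (d.val + 1))) (Fin (n d.val)) ℝ)
    (x : Fin (n 0) → ℝ) (α : Fin D → ℝ) (hα : ∀ k, 0 < α k)
    (d : ℕ) (hd1 : 1 ≤ d) (hd2 : d < D) :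
    jac D n (fun k => α k • W k) x d D le_rfl
      = (∏ k ∈ Finset.univ.filter (fun k : Fin D => d ≤ (k : ℕ)), α k) •
          jac D n W x d D le_rfl := by
  rw [jac_scale D n W x α hα d D le_rfl hd2.le]
  simp
end
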